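/- Let g = s ⋉ h be a finite-dimensional perfect complex Lie algebra with simple Levi subalgebra s whose radical h decomposes into at most 2 simple s-modules (i.e. h is either an irreducible s-module or the direct sum of two irreducible s-submodules). Then g is not sympathetic. -/

import Mathlib

/-!
Write `R` for the radical. Since `R` is solvable, Lie's theorem makes it act by scalars on every
irreducible `g`-module, and these scalars are traces, which vanish because `g` is perfect; so `R`
annihilates every minimal ideal of `g`. As `R` has length at most two over `s`, the proper ideal
`⁅R, R⁆` is zero or irreducible, whence `⁅R, ⁅R, R⁆⁆ = 0`, and it has an `s`-invariant complement
`U` in `R`. Then `g = s ⊕ U ⊕ ⁅R, R⁆` is a grading by the degrees `0, 1, 2`, and its degree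
derivation is outer: were it `ad z`, then `⁅z, g⁆ ⊆ R` would force `z ∈ R`, hence `U ⊆ ⁅R, R⁆`.
-/

namespace Symp

variable (g : Type*) [LieRing g] [LieAlgebra ℂ g]

/-- A derivation of `g` is inner if it is given by the adjoint action of some element. -/
def IsInnerDer {g : Type*} [LieRing g] [LieAlgebra ℂ g] (D : LieDerivation ℂ g g) : Prop :=
  ∃ x : g, ∀ y : g, D y = ⁅x, y⁆

/-- `g` is perfect: `[g,g] = g`. -/
def IsPerfectLie : Prop :=
  ⁅(⊤ : LieIdeal ℂ g), (⊤ : LieIdeal ℂ g)⁆ = ⊤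

/-- A sympathetic Lie algebra: trivial centre, perfect, all derivations inner. -/
def IsSympathetic : Prop :=
  LieAlgebra.center ℂ g = ⊥ ∧ IsPerfectLie g ∧
    ∀ D : LieDerivation ℂ g g, IsInnerDer D

/-- `s` is a simple Levi subalgebra of `g`: it is a simple Lie algebra and a vector-space
complement to the radical. -/
def IsSimpleLevi (s : LieSubalgebra ℂ g) : Prop :=
  LieAlgebra.IsSimple ℂ s ∧
    IsCompl s.toSubmodule (LieAlgebra.radical ℂ g).toSubmodule

/-- `s` is a Levi subalgebra of `g` isomorphic to `sl₂(ℂ)`. -/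
def IsSl2Levi (s : LieSubalgebra ℂ g) : Prop :=
  Nonempty (s ≃ₗ⁅ℂ⁆ LieAlgebra.SpecialLinear.sl (Fin 2) ℂ) ∧
    IsCompl s.toSubmodule (LieAlgebra.radical ℂ g).toSubmodule

/-- The subspace spanned by all brackets `⁅x, y⁆` with `x ∈ A`, `y ∈ B`. -/
def lieSpan2 (A B : Submodule ℂ g) : Submodule ℂ g :=
  Submodule.span ℂ {z : g | ∃ x ∈ A, ∃ y ∈ B, z = ⁅x, y⁆}

/-- A subspace of `g` invariant under the bracket action of the subalgebra `s`. -/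
def Invariant (s : LieSubalgebra ℂ g) (W : Submodule ℂ g) : Prop :=
  ∀ x ∈ s, ∀ w ∈ W, ⁅x, w⁆ ∈ W

/-- `V` is an irreducible `s`-submodule of `g`. -/
def IsIrreducibleSMod (s : LieSubalgebra ℂ g) (V : Submodule ℂ g) : Prop :=
  V ≠ ⊥ ∧ Invariant g s V ∧
    ∀ W : Submodule ℂ g, W ≤ V → Invariant g s W → W = ⊥ ∨ W = V

/-- The family `V` is a decomposition of the radical of `g` into irreducible `s`-modules. -/
def IsDecomp (s : LieSubalgebra ℂ g) {k : ℕ} (V : Fin k → Submodule ℂ g) : Prop :=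
  (∀ i, IsIrreducibleSMod g s (V i)) ∧ iSupIndep V ∧
    (⨆ i, V i) = (LieAlgebra.radical ℂ g).toSubmodule

/-- The convention: any nonzero bracket of two of the modules equals one of them,
for a unique index. -/
def Convention {k : ℕ} (V : Fin k → Submodule ℂ g) : Prop :=
  ∀ i j, lieSpan2 g (V i) (V j) ≠ ⊥ → ∃! q, lieSpan2 g (V i) (V j) = V q

/-- The centre `Z(h)` of the radical `h = Rad(g)`, as a subspace of `g`. -/
def centerRad : Submodule ℂ g where
  carrier := {x | x ∈ LieAlgebra.radical ℂ g ∧ ∀ y ∈ LieAlgebra.radical ℂ g, ⁅x, y⁆ = 0}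
  add_mem' := by
    rintro a b ⟨ha, ha'⟩ ⟨hb, hb'⟩
    exact ⟨add_mem ha hb, fun y hy => by rw [add_lie, ha' y hy, hb' y hy, add_zero]⟩
  zero_mem' := ⟨zero_mem _, fun y _ => zero_lie y⟩
  smul_mem' := by
    rintro c a ⟨ha, ha'⟩
    exact ⟨SMulMemClass.smul_mem c ha, fun y hy => by rw [smul_lie, ha' y hy, smul_zero]⟩

/-- The derived subalgebra `[h,h]` of the radical `h = Rad(g)`, as a subspace of `g`. -/
def derivedRad : Submodule ℂ g :=
  lieSpan2 g (LieAlgebra.radical ℂ g).toSubmodule (LieAlgebra.radical ℂ g).toSubmodule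

end Symp

section Modular

variable {α : Type*} [Lattice α] [OrderBot α] [IsModularLattice α] {a b c : α}

theorem wcovBy_sup_of_isAtom (a : α) (hb : IsAtom b) : a ⩿ a ⊔ b := by
  by_cases hba : b ≤ a
  · exact le_sup_left.wcovBy_of_le (sup_eq_left.2 hba).le
  · exact (covBy_sup_of_inf_covBy_right
      ((hb.not_le_iff_disjoint.1 hba).symm.eq_bot ▸ hb.bot_covBy)).wcovBy

theorem eq_of_le_of_lt_sup_of_isAtom (hb : IsAtom b) (hac : a ≤ c) (hc : c < a ⊔ b) : c = a :=
  ((wcovBy_sup_of_isAtom a hb).eq_or_eq hac hc.le).resolve_right hc.ne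

theorem sup_eq_sup_of_disjoint_of_isAtom (hb : IsAtom b) (hac : Disjoint a c) (hc₀ : c ≠ ⊥)
    (hc : c ≤ a ⊔ b) : a ⊔ c = a ⊔ b :=
  ((wcovBy_sup_of_isAtom a hb).eq_or_eq le_sup_left (sup_le le_sup_left hc)).resolve_left
    fun h ↦ hc₀ (hac.eq_bot_of_ge (sup_eq_left.1 h))

theorem isAtom_of_lt_sup_of_isAtom (ha : IsAtom a) (hb : IsAtom b) (hc₀ : c ≠ ⊥)
    (hc : c < a ⊔ b) : IsAtom c := by
  by_cases hac : a ≤ c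
  · exact eq_of_le_of_lt_sup_of_isAtom hb hac hc ▸ ha
  · have hdisj : Disjoint a c := ha.not_le_iff_disjoint.1 hac
    have hsup : a ⊔ c = a ⊔ b := sup_eq_sup_of_disjoint_of_isAtom hb hdisj hc₀ hc.le
    have hcov : a ⋖ a ⊔ c := hsup ▸ (wcovBy_sup_of_isAtom a hb).covBy_of_ne fun h ↦
      hc₀ (hdisj.eq_bot_of_ge (sup_eq_left.1 (hsup.trans h.symm)))
    exact bot_covBy_iff.1 (hdisj.eq_bot ▸ inf_covBy_of_covBy_sup_left hcov)

theorem exists_disjoint_sup_eq_of_lt_sup_of_isAtom (ha : IsAtom a) (hb : IsAtom b)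
    (hc : c < a ⊔ b) : ∃ u, Disjoint u c ∧ u ⊔ c = a ⊔ b := by
  rcases eq_or_ne c ⊥ with rfl | hc₀
  · exact ⟨a ⊔ b, disjoint_bot_right, sup_bot_eq _⟩
  by_cases hac : a ≤ c
  · obtain rfl := eq_of_le_of_lt_sup_of_isAtom hb hac hc
    exact ⟨b, hb.disjoint_of_ne ha (by rintro rfl; exact hc.ne (sup_idem _).symm), sup_comm _ _⟩
  · have hdisj : Disjoint a c := ha.not_le_iff_disjoint.1 hac
    exact ⟨a, hdisj, sup_eq_sup_of_disjoint_of_isAtom hb hdisj hc₀ hc.le⟩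

end Modular

open LieAlgebra LieModule

section Ideals

variable {R L : Type*} [CommRing R] [LieRing L] [LieAlgebra R L]

theorem eq_bot_of_lie_self_eq {I : LieIdeal R L} [IsSolvable I] (h : ⁅I, I⁆ = I) : I = ⊥ := by
  obtain ⟨k, hk⟩ := IsSolvable.solvable R I
  have hconst (n : ℕ) : derivedSeriesOfIdeal R L n I = I := by
    induction n with
    | zero => rfl
    | succ n ih => rw [derivedSeriesOfIdeal_succ, ih, h]
  rw [← hconst k, ← LieIdeal.derivedSeries_eq_bot_iff, hk]

theorem normalizer_radical [IsNoetherian R L] : (radical R L).normalizer = radical R L := by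
  refine le_antisymm ?_ (LieSubmodule.le_normalizer _)
  rw [← LieIdeal.solvable_iff_le_radical]
  have hder : derivedSeriesOfIdeal R L 1 (radical R L).normalizer ≤ radical R L :=
    (LieSubmodule.lie_le_iff ..).2 fun x _ y hy ↦ hy x
  obtain ⟨k, hk⟩ := IsSolvable.solvable R (radical R L)
  rw [LieIdeal.derivedSeries_eq_bot_iff] at hk
  refine .mk (R := R) (k := k + 1) ((LieIdeal.derivedSeries_eq_bot_iff _ _).2 ?_)
  rw [derivedSeriesOfIdeal_add, eq_bot_iff, ← hk]
  exact derivedSeriesOfIdeal_mono hder k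

theorem radical_eq_bot_of_lie_sub_mem [IsNoetherian R L] {z : L}
    (hz : ∀ x, ⁅z, x⁆ ∈ radical R L)
    (hz' : ∀ x ∈ radical R L, ⁅z, x⁆ - x ∈ ⁅radical R L, radical R L⁆) : radical R L = ⊥ := by
  have hzR : z ∈ radical R L := by
    rw [← normalizer_radical, ← LieIdeal.idealizer_eq_normalizer]
    exact hz
  refine eq_bot_of_lie_self_eq (le_antisymm (LieSubmodule.lie_le_right _ _) fun x hx ↦ ?_)
  rw [← sub_sub_self ⁅z, x⁆ x]
  exact sub_mem (LieSubmodule.lie_mem_lie hzR hx) (hz' x hx)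

end Ideals

section DegreeDerivation

variable {R L : Type*} [CommRing R] [LieRing L] [LieAlgebra R L]

theorem apply_lie_of_sup_eq_top {s : LieSubalgebra R L} {P : Submodule R L}
    (hsP : s.toSubmodule ⊔ P = ⊤) {D : L →ₗ[R] L} (hD₀ : ∀ x ∈ s, D x = 0)
    (hDs : ∀ x ∈ s, ∀ y, D ⁅x, y⁆ = ⁅x, D y⁆)
    (hDP : ∀ x ∈ P, ∀ y ∈ P, D ⁅x, y⁆ = ⁅x, D y⁆ - ⁅y, D x⁆) (x y : L) :
    D ⁅x, y⁆ = ⁅x, D y⁆ - ⁅y, D x⁆ := by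
  obtain ⟨a, ha, u, hu, rfl⟩ := Submodule.mem_sup.1 (hsP ▸ Submodule.mem_top : x ∈ _ ⊔ P)
  obtain ⟨b, hb, v, hv, rfl⟩ := Submodule.mem_sup.1 (hsP ▸ Submodule.mem_top : y ∈ _ ⊔ P)
  have hub : D ⁅u, b⁆ = -⁅b, D u⁆ := by rw [← lie_skew, map_neg, hDs b hb]
  simp only [add_lie, lie_add, map_add, hD₀ a ha, hD₀ b hb, hDs a ha, hDP u hu v hv, hub, lie_zero]
  abel

theorem apply_lie_of_apply_sub_mem {I : LieIdeal R L} (hI : ⁅I, ⁅I, I⁆⁆ = ⊥) {D : L →ₗ[R] L}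
    (hD₁ : ∀ x ∈ I, D x - x ∈ ⁅I, I⁆) (hD₂ : ∀ x ∈ ⁅I, I⁆, D x = x + x)
    {x y : L} (hx : x ∈ I) (hy : y ∈ I) : D ⁅x, y⁆ = ⁅x, D y⁆ - ⁅y, D x⁆ := by
  have hlie (a b : L) (ha : a ∈ I) (hb : b ∈ I) : ⁅a, D b⁆ = ⁅a, b⁆ := by
    rw [← sub_eq_zero, ← lie_sub]
    exact (LieSubmodule.lie_eq_bot_iff ..).1 hI a ha _ (hD₁ b hb)
  rw [hD₂ _ (LieSubmodule.lie_mem_lie hx hy), hlie x y hx hy, hlie y x hy hx, ← lie_skew y x,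
    sub_neg_eq_add]

theorem projection_lie {M : Type*} [AddCommGroup M] [Module R M] [LieRingModule L M]
    [LieModule R L M] {P Q : LieSubmodule R L M} (h : IsCompl P.toSubmodule Q.toSubmodule)
    (x : L) (m : M) :
    P.toSubmodule.projection Q.toSubmodule h ⁅x, m⁆ =
      ⁅x, P.toSubmodule.projection Q.toSubmodule h m⁆ := by
  have hinv (N : LieSubmodule R L M) : N.toSubmodule ∈ (toEnd R L M x).invtSubmodule :=
    fun n hn ↦ N.lie_mem hn
  have hcomm : Commute (P.toSubmodule.projection Q.toSubmodule h) (toEnd R L M x) := by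
    rw [LinearMap.IsIdempotentElem.commute_iff (Submodule.isIdempotentElem_projection h),
      Submodule.range_projection, Submodule.ker_projection]
    exact ⟨hinv P, hinv Q⟩
  exact LinearMap.congr_fun hcomm m

theorem exists_lieDerivation_apply_sub_mem {s : LieSubalgebra R L} {I : LieIdeal R L}
    (hs : IsCompl s.toSubmodule I.toSubmodule) (hI : ⁅I, ⁅I, I⁆⁆ = ⊥)
    {C : LieSubmodule R s L} (hsC : s.toLieSubmodule ≤ C)
    (hC : IsCompl C (LieSubmodule.restr ⁅I, I⁆ s)) :
    ∃ D : LieDerivation R L L, (∀ x, D x ∈ I) ∧ ∀ x ∈ I, D x - x ∈ ⁅I, I⁆ := by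
  have hIs : IsCompl (I.restr s).toSubmodule s.toLieSubmodule.toSubmodule := hs.symm
  have hNC : IsCompl (LieSubmodule.restr ⁅I, I⁆ s).toSubmodule C.toSubmodule :=
    (LieSubmodule.isCompl_toSubmodule.2 hC).symm
  have hle : ⁅I, I⁆ ≤ I := LieSubmodule.lie_le_right I I
  let p : L →ₗ[R] L := (I.restr s).toSubmodule.projection _ hIs
  let q : L →ₗ[R] L := (LieSubmodule.restr ⁅I, I⁆ s).toSubmodule.projection _ hNC
  have hpI (x : L) (hx : x ∈ I) : p x = x := Submodule.projection_apply_of_mem_left hIs hx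
  have hqN (x : L) (hx : x ∈ ⁅I, I⁆) : q x = x := Submodule.projection_apply_of_mem_left hNC hx
  have hq (x : L) : q x ∈ ⁅I, I⁆ := Submodule.projection_apply_mem hNC x
  have hD₀ (x : L) (hx : x ∈ s) : (p + q) x = 0 := by
    have hpx : p x = 0 := (Submodule.projection_apply_eq_zero_iff hIs).2 hx
    have hqx : q x = 0 := (Submodule.projection_apply_eq_zero_iff hNC).2 (hsC hx)
    rw [LinearMap.add_apply, hpx, hqx, add_zero]
  have hDs (x : L) (hx : x ∈ s) (y : L) : (p + q) ⁅x, y⁆ = ⁅x, (p + q) y⁆ := by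
    have hpx : p ⁅x, y⁆ = ⁅x, p y⁆ := projection_lie hIs ⟨x, hx⟩ y
    have hqx : q ⁅x, y⁆ = ⁅x, q y⁆ := projection_lie hNC ⟨x, hx⟩ y
    rw [LinearMap.add_apply, LinearMap.add_apply, lie_add, hpx, hqx]
  have hD₁ (x : L) (hx : x ∈ I) : (p + q) x - x ∈ ⁅I, I⁆ := by
    rw [LinearMap.add_apply, hpI x hx, add_sub_cancel_left]
    exact hq x
  have hD₂ (x : L) (hx : x ∈ ⁅I, I⁆) : (p + q) x = x + x := by
    rw [LinearMap.add_apply, hpI x (hle hx), hqN x hx]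
  exact ⟨⟨p + q, apply_lie_of_sup_eq_top hs.sup_eq_top hD₀ hDs fun _ hx _ hy ↦
      apply_lie_of_apply_sub_mem hI hD₁ hD₂ hx hy⟩,
    fun x ↦ add_mem (Submodule.projection_apply_mem hIs x) (hle (hq x)), hD₁⟩

theorem exists_lieDerivation_notMem_range_ad [IsNoetherian R L] {s : LieSubalgebra R L}
    (hs : IsCompl s.toSubmodule (radical R L).toSubmodule) (h₀ : radical R L ≠ ⊥)
    (h₂ : ⁅radical R L, ⁅radical R L, radical R L⁆⁆ = ⊥) {U : LieSubmodule R s L}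
    (hU : Disjoint U (LieSubmodule.restr ⁅radical R L, radical R L⁆ s))
    (hU' : U ⊔ LieSubmodule.restr ⁅radical R L, radical R L⁆ s = (radical R L).restr s) :
    ∃ D : LieDerivation R L L, D ∉ (LieDerivation.ad R L).range := by
  have hs' : IsCompl s.toLieSubmodule ((radical R L).restr s) :=
    LieSubmodule.isCompl_toSubmodule.1 hs
  have hC : IsCompl (s.toLieSubmodule ⊔ U) (LieSubmodule.restr ⁅radical R L, radical R L⁆ s) :=
    hU.isCompl_sup_left_of_isCompl_sup_right (hU'.symm ▸ hs')
  obtain ⟨D, hD, hD'⟩ := exists_lieDerivation_apply_sub_mem hs h₂ le_sup_left hC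
  refine ⟨D, fun hmem ↦ ?_⟩
  obtain ⟨z, rfl⟩ := (LieHom.mem_range _ _).1 hmem
  exact h₀ (radical_eq_bot_of_lie_sub_mem (z := z) (by simpa using hD) (by simpa using hD'))

end DegreeDerivation

theorem isIrreducible_of_isAtom {R L M : Type*} [CommRing R] [LieRing L] [LieAlgebra R L]
    [AddCommGroup M] [Module R M] [LieRingModule L M] [LieModule R L M] {N : LieSubmodule R L M}
    (hN : IsAtom N) : IsIrreducible R L N := by
  have := (LieSubmodule.nontrivial_iff_ne_bot R L M).2 hN.ne_bot
  refine .mk fun P hP ↦ ?_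
  by_contra hP'
  have hbot : P.map N.incl = ⊥ :=
    hN.lt_iff.1 (LieSubmodule.map_incl_lt_iff_lt_top.2 (lt_top_iff_ne_top.2 hP'))
  exact hP ((LieSubmodule.mapOrderEmbedding N.injective_incl).injective
    (hbot.trans LieSubmodule.map_bot.symm))

section SolvableIdeal

variable {K L M : Type*} [Field K] [CharZero K] [LieRing L] [LieAlgebra K L] [AddCommGroup M]
  [Module K M] [LieRingModule L M] [LieModule K L M] [FiniteDimensional K M]

theorem exists_forall_toEnd_eq_smul_id (I : LieIdeal K L) [IsSolvable I] [IsIrreducible K L M]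
    [IsTriangularizable K I M] :
    ∃ χ : I → K, ∀ x : I, toEnd K L M x = χ x • LinearMap.id := by
  have := nontrivial_of_isIrreducible K L M
  obtain ⟨χ, hχ⟩ := exists_nontrivial_weightSpace_of_isSolvable K I M
  have htop : weightSpaceOfIsLieTower K M χ = (⊤ : LieSubmodule K L M) :=
    have : Nontrivial (weightSpaceOfIsLieTower K M χ : LieSubmodule K L M) := hχ
    LieSubmodule.eq_top_of_isIrreducible K L M _
  refine ⟨χ, fun x ↦ LinearMap.ext fun m ↦ ?_⟩
  have hm : m ∈ (weightSpaceOfIsLieTower K M χ : LieSubmodule K L M) :=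
    htop ▸ LieSubmodule.mem_top m
  exact (mem_weightSpace χ m).1 hm x

theorem lie_eq_zero_of_isIrreducible (hL : ⁅(⊤ : LieIdeal K L), (⊤ : LieIdeal K L)⁆ = ⊤)
    {I : LieIdeal K L} [IsSolvable I] [IsIrreducible K L M] [IsTriangularizable K I M]
    {x : L} (hx : x ∈ I) (m : M) : ⁅x, m⁆ = 0 := by
  have := nontrivial_of_isIrreducible K L M
  obtain ⟨χ, hχ⟩ := exists_forall_toEnd_eq_smul_id (M := M) I
  have htr : LinearMap.trace K M (toEnd K L M x) = 0 :=
    trace_toEnd_eq_zero_of_mem_lcs (k := 1) K L M le_rfl (by simp [hL])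
  have hχx : χ ⟨x, hx⟩ = 0 := by
    simpa [hχ ⟨x, hx⟩, Module.finrank_pos.ne'] using htr
  simpa [hχx] using LinearMap.congr_fun (hχ ⟨x, hx⟩) m

variable [IsAlgClosed K]

theorem lie_eq_bot_of_isAtom (hL : ⁅(⊤ : LieIdeal K L), (⊤ : LieIdeal K L)⁆ = ⊤)
    (I : LieIdeal K L) [IsSolvable I] {N : LieSubmodule K L M} (hN : IsAtom N) : ⁅I, N⁆ = ⊥ := by
  have := isIrreducible_of_isAtom hN
  rw [LieSubmodule.lie_eq_bot_iff]
  intro x hx m hm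
  exact congrArg Subtype.val (lie_eq_zero_of_isIrreducible hL hx (⟨m, hm⟩ : N))

theorem lie_eq_bot_of_restr_lt_sup (hL : ⁅(⊤ : LieIdeal K L), (⊤ : LieIdeal K L)⁆ = ⊤)
    (I : LieIdeal K L) [IsSolvable I] {s : LieSubalgebra K L} {A B : LieSubmodule K s M}
    (hA : IsAtom A) (hB : IsAtom B) {N : LieSubmodule K L M} (hN : N.restr s < A ⊔ B) :
    ⁅I, N⁆ = ⊥ := by
  rcases eq_or_ne N ⊥ with rfl | hN₀
  · exact LieSubmodule.lie_bot I
  · let restrict : LieSubmodule K L M ↪o LieSubmodule K s M :=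
      .ofMapLEIff (LieSubmodule.restr · s) fun _ _ ↦ Iff.rfl
    have hNs : IsAtom (N.restr s) :=
      isAtom_of_lt_sup_of_isAtom hA hB (restrict.injective.ne hN₀) hN
    exact lie_eq_bot_of_isAtom hL I (restrict.isAtom_of_map_bot_of_image rfl hNs)

end SolvableIdeal

theorem stmt4_general {K L : Type*} [Field K] [CharZero K] [IsAlgClosed K] [LieRing L]
    [LieAlgebra K L] [FiniteDimensional K L]
    (hperf : ⁅(⊤ : LieIdeal K L), (⊤ : LieIdeal K L)⁆ = ⊤) {s : LieSubalgebra K L}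
    (hs : IsCompl s.toSubmodule (radical K L).toSubmodule) {A B : LieSubmodule K s L}
    (hA : IsAtom A) (hB : IsAtom B) (hAB : A ⊔ B = (radical K L).restr s) :
    ∃ D : LieDerivation K L L, D ∉ (LieDerivation.ad K L).range := by
  have h₀ : radical K L ≠ ⊥ := fun h ↦
    hA.ne_bot (eq_bot_iff.2 (h ▸ hAB ▸ le_sup_left : A ≤ LieSubmodule.restr ⊥ s))
  have hlt : LieSubmodule.restr ⁅radical K L, radical K L⁆ s < A ⊔ B := by
    rw [hAB]
    exact (LieSubmodule.lie_le_right _ _).lt_of_ne (mt eq_bot_of_lie_self_eq h₀)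
  have h₂ : ⁅radical K L, ⁅radical K L, radical K L⁆⁆ = ⊥ :=
    lie_eq_bot_of_restr_lt_sup hperf _ hA hB hlt
  obtain ⟨U, hU, hU'⟩ := exists_disjoint_sup_eq_of_lt_sup_of_isAtom hA hB hlt
  exact exists_lieDerivation_notMem_range_ad hs h₀ h₂ hU (hU'.trans hAB)

section Translation

variable {g : Type*} [LieRing g] [LieAlgebra ℂ g] {s : LieSubalgebra ℂ g}

theorem Symp.IsIrreducibleSMod.exists_isAtom {V : Submodule ℂ g}
    (hV : Symp.IsIrreducibleSMod g s V) :
    ∃ N : LieSubmodule ℂ s g, IsAtom N ∧ N.toSubmodule = V := by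
  obtain ⟨hV₀, hinv, hmin⟩ := hV
  refine ⟨⟨V, fun {x v} hv ↦ hinv x x.2 v hv⟩, ⟨?_, fun P hP ↦ ?_⟩, rfl⟩
  · exact mt (congrArg LieSubmodule.toSubmodule) hV₀
  · have hPinv : Symp.Invariant g s P.toSubmodule := fun x hx w hw ↦ P.lie_mem (x := ⟨x, hx⟩) hw
    exact LieSubmodule.toSubmodule_injective ((hmin P.toSubmodule hP.le hPinv).resolve_right
      fun h ↦ hP.ne (LieSubmodule.toSubmodule_injective h))

theorem Symp.IsDecomp.exists_isAtom_sup_eq {k : ℕ} {V : Fin k → Submodule ℂ g}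
    (hV : Symp.IsDecomp g s V) (hk : k = 1 ∨ k = 2) :
    ∃ A B : LieSubmodule ℂ s g, IsAtom A ∧ IsAtom B ∧ A ⊔ B = (radical ℂ g).restr s := by
  obtain ⟨hirr, -, hsup⟩ := hV
  choose N hN hNV using fun i ↦ (hirr i).exists_isAtom
  have hNsup : ⨆ i, N i = (radical ℂ g).restr s :=
    LieSubmodule.toSubmodule_injective (by simpa [hNV] using hsup)
  rcases hk with rfl | rfl
  · exact ⟨N 0, N 0, hN 0, hN 0, by simpa using hNsup⟩
  · exact ⟨N 0, N 1, hN 0, hN 1, (eq_of_forall_ge_iff fun _ ↦ by simp).trans hNsup⟩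

theorem Symp.isInnerDer_iff_mem_range_ad {D : LieDerivation ℂ g g} :
    Symp.IsInnerDer D ↔ D ∈ (LieDerivation.ad ℂ g).range := by
  simp [Symp.IsInnerDer, LieDerivation.ext_iff, eq_comm]

end Translation

/-- a perfect Lie algebra with simple Levi subalgebra whose radical decomposes
into at most 2 simple modules is not sympathetic. -/
theorem stmt4 (g : Type*) [LieRing g] [LieAlgebra ℂ g] [FiniteDimensional ℂ g]
    (hperf : Symp.IsPerfectLie g)
    (s : LieSubalgebra ℂ g) (hs : Symp.IsSimpleLevi g s)
    (k : ℕ) (hk : k = 1 ∨ k = 2)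
    (V : Fin k → Submodule ℂ g) (hdec : Symp.IsDecomp g s V) :
    ¬ Symp.IsSympathetic g := by
  obtain ⟨A, B, hA, hB, hAB⟩ := hdec.exists_isAtom_sup_eq hk
  obtain ⟨D, hD⟩ := stmt4_general hperf hs.2 hA hB hAB
  exact fun h ↦ hD (Symp.isInnerDer_iff_mem_range_ad.1 (h.2.2 D))
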